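/- Let n ≥ 2, 1/2 < s < 1, and let L, C, η₀ > 0. Let u : ℝⁿ → ℝ be Lipschitz with constant L and semiconcave with constant C, and suppose u satisfies the ellipticity bound η₀ at a point x ∈ ℝⁿ. Then the function t ↦ δ(u,x,t·e₁)/|t|^{1+2s} is Lebesgue integrable on ℝ (e₁ the first standard basis vector) and (1−s)·(1/2)·∫_ℝ δ(u,x,t·e₁)/|t|^{1+2s} dt ≥ μ₀. -/

import Mathlib

open MeasureTheory

noncomputable def surfOmega (k : ℕ) : ℝ := 2 * Real.pi ^ ((k : ℝ) / 2) / Real.Gamma ((k : ℝ) / 2)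

noncomputable def mu1 (s L C : ℝ) : ℝ := L ^ (2 - 2 * s) * (C / 2) ^ (2 * s - 1) / (2 * s - 1)

noncomputable def C1 (n : ℕ) (s L C : ℝ) : ℝ :=
  (Real.sqrt Real.pi * Real.Gamma (((n : ℝ) - 1) / 2 + s) / Real.Gamma ((n : ℝ) / 2 + s)) *
    (mu1 s L C * surfOmega (n - 1) / 2)

noncomputable def C2 (n : ℕ) (s : ℝ) : ℝ :=
  surfOmega (n - 1) * Real.Gamma (((n : ℝ) - 1) / 2) * Real.Gamma (s + 1 / 2) /
    (2 * Real.Gamma ((n : ℝ) / 2 + s))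

noncomputable def mu0 (n : ℕ) (s L C η₀ : ℝ) : ℝ :=
  C1 n s L C ^ (1 - (n : ℝ)) * (C2 n s)⁻¹ * (η₀ / 2) ^ (n : ℝ)

/-- Second-order increment `δ(u,x,y) = u(x+y) + u(x-y) - 2u(x)`. -/
noncomputable def delta2 {n : ℕ} (u : EuclideanSpace ℝ (Fin n) → ℝ)
    (x y : EuclideanSpace ℝ (Fin n)) : ℝ :=
  u (x + y) + u (x - y) - 2 * u x

/-- Integrand `δ(u,x,y)/|A⁻¹ y|^(n+2s)`. -/
noncomputable def kernelA {n : ℕ} (s : ℝ) (A : Matrix (Fin n) (Fin n) ℝ)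
    (u : EuclideanSpace ℝ (Fin n) → ℝ) (x y : EuclideanSpace ℝ (Fin n)) : ℝ :=
  delta2 u x y /
    ‖(EuclideanSpace.equiv (Fin n) ℝ).symm (A⁻¹.mulVec (EuclideanSpace.equiv (Fin n) ℝ y))‖ ^
      ((n : ℝ) + 2 * s)

/-- The linear operator `L_A u(x) = (1/2) ∫ δ(u,x,y)/|A⁻¹ y|^(n+2s) dy`. -/
noncomputable def LA {n : ℕ} (s : ℝ) (A : Matrix (Fin n) (Fin n) ℝ)
    (u : EuclideanSpace ℝ (Fin n) → ℝ) (x : EuclideanSpace ℝ (Fin n)) : ℝ :=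
  (1 / 2) * ∫ y, kernelA s A u x y


theorem wprod {X Y : Type*} [MeasurableSpace X] [MeasurableSpace Y] {μ : Measure X} {ν : Measure Y}
    [SFinite μ] [SFinite ν] (f : X → ℝ) (K : X → Y → ℝ) (k : X → ℝ)
    (hm : AEStronglyMeasurable (fun p : X × Y => f p.1 * K p.1 p.2) (μ.prod ν))
    (h0 : ∀ x y, 0 ≤ K x y)
    (hK : ∀ᵐ x ∂μ, Integrable (K x) ν ∧ ∫ y, K x y ∂ν = k x)
    (hfk : Integrable (fun x => f x * k x) μ) :
    Integrable (fun p : X × Y => f p.1 * K p.1 p.2) (μ.prod ν) ∧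
    ∫ p, f p.1 * K p.1 p.2 ∂(μ.prod ν) = ∫ x, f x * k x ∂μ := by
  have hi : Integrable (fun p : X × Y => f p.1 * K p.1 p.2) (μ.prod ν) := by
    rw [integrable_prod_iff hm]
    constructor
    · filter_upwards [hK] with x hx
      exact hx.1.const_mul _
    · refine hfk.norm.congr ?_
      filter_upwards [hK] with x hx
      have hk : 0 ≤ k x := by rw [← hx.2]; exact integral_nonneg (h0 x)
      simp only [norm_mul, Real.norm_eq_abs, abs_of_nonneg (h0 x _), abs_of_nonneg hk]
      rw [integral_const_mul, hx.2]
  refine ⟨hi, ?_⟩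
  rw [integral_prod _ hi]
  refine integral_congr_ae ?_
  filter_upwards [hK] with x hx
  rw [integral_const_mul, hx.2]

theorem gauss_integrable {V : Type*} [NormedAddCommGroup V] [InnerProductSpace ℝ V]
    [FiniteDimensional ℝ V] [MeasurableSpace V] [BorelSpace V] {b : ℝ} (hb : 0 < b) :
    Integrable (fun v : V => Real.exp (-b * ‖v‖ ^ 2)) := by
  have h := (GaussianFourier.integral_rexp_neg_mul_sq_norm (V := V) hb)
  by_contra hc
  rw [integral_undef hc] at h
  have : 0 < (Real.pi / b) ^ ((Module.finrank ℝ V : ℝ) / 2) := by positivity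
  linarith

theorem bracket {V : Type*} [NormedAddCommGroup V] [InnerProductSpace ℝ V]
    [FiniteDimensional ℝ V] [MeasurableSpace V] [BorelSpace V] {b c q : ℝ} (hb : 0 < b) (hc : 0 < c)
    (hq : (Module.finrank ℝ V : ℝ) / 2 < q) :
    Integrable (fun v : V => (c + b * ‖v‖ ^ 2) ^ (-q)) ∧
    ∫ v : V, (c + b * ‖v‖ ^ 2) ^ (-q) = (Real.pi / b) ^ ((Module.finrank ℝ V : ℝ) / 2) *
      (Real.Gamma (q - (Module.finrank ℝ V : ℝ) / 2) / Real.Gamma q) *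
      c ^ ((Module.finrank ℝ V : ℝ) / 2 - q) := by
  set d : ℝ := (Module.finrank ℝ V : ℝ) / 2 with hd
  have hd0 : 0 ≤ d := by positivity
  have hq0 : 0 < q := lt_of_le_of_lt hd0 hq
  have hG : 0 < Real.Gamma q := Real.Gamma_pos_of_pos hq0
  have key : ∀ τ : ℝ, 0 < τ → (τ ^ (q-1) * Real.exp (-(c*τ))) * (Real.pi / (τ * b)) ^ d =
      (Real.pi / b) ^ d * (τ ^ ((q - d) - 1) * Real.exp (-(c * τ))) := by
    intro τ hτ
    have h1 : (Real.pi / (τ * b)) ^ d = (Real.pi / b) ^ d * τ ^ (-d) := by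
      rw [Real.rpow_neg hτ.le, ← Real.inv_rpow hτ.le, ← Real.mul_rpow (by positivity) (by positivity)]
      congr 1
      field_simp
    rw [h1, show q - d - 1 = (q - 1) + (-d) by ring, Real.rpow_add hτ]
    ring
  have gi : ∀ (a r : ℝ), 0 < a → 0 < r →
      IntegrableOn (fun t : ℝ => t ^ (a - 1) * Real.exp (-(r * t))) (Set.Ioi 0) := by
    intro a r ha hr
    have := integrableOn_rpow_mul_exp_neg_mul_rpow (p := 1) (s := a - 1) (b := r) (by linarith) one_pos hr
    simpa using this
  have W := wprod (μ := volume.restrict (Set.Ioi (0:ℝ))) (ν := (volume : Measure V))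
    (fun τ => τ ^ (q-1) * Real.exp (-(c*τ))) (fun τ v => Real.exp (-(τ * b) * ‖v‖ ^ 2))
    (fun τ => (Real.pi / (τ * b)) ^ d)
    (by
      apply Measurable.aestronglyMeasurable
      fun_prop)
    (fun _ _ => (Real.exp_pos _).le)
    (by
      filter_upwards [ae_restrict_mem measurableSet_Ioi] with τ hτ
      have hτ' : 0 < τ * b := mul_pos hτ hb
      exact ⟨gauss_integrable hτ', GaussianFourier.integral_rexp_neg_mul_sq_norm hτ'⟩)
    (by
      refine Integrable.congr ((gi (q - d) c (by linarith) hc).const_mul ((Real.pi / b) ^ d)) ?_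
      filter_upwards [ae_restrict_mem measurableSet_Ioi] with τ hτ
      exact (key τ hτ).symm)
  have sec : ∀ v : V, ∫ τ in Set.Ioi (0:ℝ), (τ ^ (q-1) * Real.exp (-(c*τ))) * Real.exp (-(τ * b) * ‖v‖ ^ 2)
      = Real.Gamma q * (c + b * ‖v‖ ^ 2) ^ (-q) := by
    intro v
    have hp : 0 < c + b * ‖v‖ ^ 2 := by positivity
    have := Real.integral_rpow_mul_exp_neg_mul_Ioi hq0 hp
    rw [one_div, Real.inv_rpow hp.le, ← Real.rpow_neg hp.le] at this
    rw [mul_comm, ← this]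
    congr 1
    ext τ
    rw [mul_assoc, ← Real.exp_add]
    congr 2
    ring
  have I1 := W.1.integral_prod_right
  simp only [sec] at I1
  have I2 := integral_prod_symm _ W.1
  simp only [sec] at I2
  rw [W.2, integral_const_mul, setIntegral_congr_fun measurableSet_Ioi (fun τ hτ => key τ hτ),
    integral_const_mul, Real.integral_rpow_mul_exp_neg_mul_Ioi (by linarith) hc, one_div,
    Real.inv_rpow hc.le, ← Real.rpow_neg hc.le] at I2
  constructor
  · have := I1.const_mul (Real.Gamma q)⁻¹
    refine this.congr (Filter.Eventually.of_forall fun v => ?_)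
    simp only
    field_simp
  · rw [show d - q = -(q-d) by ring]
    field_simp
    linarith

/-- The radial integral. -/
theorem radial (s L C : ℝ) (hs : 1 / 2 < s) (hs1 : s < 1) (hL : 0 < L) (hC : 0 < C) :
    IntegrableOn (fun r : ℝ => min (C * r ^ 2) (2 * L * r) * r ^ (-(1 + 2 * s))) (Set.Ioi 0) ∧
    ∫ r in Set.Ioi (0:ℝ), min (C * r ^ 2) (2 * L * r) * r ^ (-(1 + 2 * s)) = mu1 s L C / (1 - s) := by
  set R := 2 * L / C with hR
  have hR0 : 0 < R := by positivity
  have e1 : ∀ r ∈ Set.Ioc 0 R, C * r ^ (1 - 2 * s) = min (C * r ^ 2) (2 * L * r) * r ^ (-(1 + 2 * s)) := by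
    intro r hr
    have h0 : 0 < r := hr.1
    rw [min_eq_left, show 1 - 2 * s = 2 + (-(1 + 2 * s)) by ring, Real.rpow_add h0]
    · rw [Real.rpow_two]; ring
    · have := hr.2
      rw [hR, le_div_iff₀ hC] at this
      nlinarith
  have e2 : ∀ r ∈ Set.Ioi R, 2 * L * r ^ (- 2 * s) = min (C * r ^ 2) (2 * L * r) * r ^ (-(1 + 2 * s)) := by
    intro r hr
    have h0 : 0 < r := lt_trans hR0 hr
    rw [min_eq_right, show - 2 * s = 1 + (-(1 + 2 * s)) by ring, Real.rpow_add h0]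
    · rw [Real.rpow_one]; ring
    · have : R < r := hr
      rw [hR, div_lt_iff₀ hC] at this
      nlinarith
  have i1 : IntegrableOn (fun r : ℝ => C * r ^ (1 - 2 * s)) (Set.Ioc 0 R) := by
    have := (intervalIntegral.intervalIntegrable_rpow' (a := 0) (b := R) (r := 1 - 2 * s) (by linarith)).const_mul C
    rwa [intervalIntegrable_iff_integrableOn_Ioc_of_le hR0.le] at this
  have i2 : IntegrableOn (fun r : ℝ => 2 * L * r ^ (- 2 * s)) (Set.Ioi R) :=
    (integrableOn_Ioi_rpow_of_lt (by linarith) hR0).const_mul _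
  have j1 := i1.congr_fun e1 measurableSet_Ioc
  have j2 := i2.congr_fun e2 measurableSet_Ioi
  have hU : Set.Ioi (0:ℝ) = Set.Ioc 0 R ∪ Set.Ioi R := (Set.Ioc_union_Ioi_eq_Ioi hR0.le).symm
  constructor
  · rw [hU]; exact j1.union j2
  · rw [hU, setIntegral_union Set.Ioc_disjoint_Ioi_same measurableSet_Ioi j1 j2,
      ← setIntegral_congr_fun measurableSet_Ioc e1, ← setIntegral_congr_fun measurableSet_Ioi e2,
      integral_const_mul, integral_const_mul, integral_Ioi_rpow_of_lt (by linarith) hR0,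
      ← intervalIntegral.integral_of_le hR0.le, integral_rpow (Or.inl (by linarith)),
      Real.zero_rpow (by linarith)]
    have h1 : R ^ (1 - 2 * s + 1) = R * R ^ (- 2 * s + 1) := by
      rw [show 1 - 2 * s + 1 = 1 + (- 2 * s + 1) by ring, Real.rpow_add hR0, Real.rpow_one]
    have h2 : R ^ (- 2 * s + 1) = L ^ (1 - 2 * s) * (C / 2) ^ (2 * s - 1) := by
      rw [show R = L / (C/2) by rw [hR]; field_simp, Real.div_rpow hL.le (by positivity),
        div_eq_mul_inv, ← Real.rpow_neg (by positivity)]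
      congr 2 <;> ring
    have h3 : L ^ (2 - 2 * s) = L * L ^ (1 - 2 * s) := by
      rw [show 2 - 2 * s = 1 + (1 - 2 * s) by ring, Real.rpow_add hL, Real.rpow_one]
    rw [h1, h2, mu1, h3, hR]
    have a1 : 1 - s ≠ 0 := by linarith
    have a2 : 2 * s - 1 ≠ 0 := by linarith
    have a3 : 1 - 2 * s + 1 ≠ 0 := by linarith
    have a4 : - 2 * s + 1 ≠ 0 := by linarith
    have b3 : 1 - 2 * s + 1 = 2 * (1 - s) := by ring
    have b4 : - 2 * s + 1 = - (2 * s - 1) := by ring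
    rw [b3, b4]
    field_simp
    ring

theorem omega_eq (m : ℕ) (hm : 1 ≤ m) :
    (m : ℝ) * (volume : Measure (EuclideanSpace ℝ (Fin m))).real (Metric.ball 0 1) = surfOmega m := by
  have : Nonempty (Fin m) := ⟨⟨0, hm⟩⟩
  have hm0 : (0:ℝ) < m := by exact_mod_cast hm
  rw [Measure.real, EuclideanSpace.volume_ball]
  simp only [ENNReal.ofReal_one, one_pow, one_mul, Fintype.card_fin]
  rw [ENNReal.toReal_ofReal (by positivity), surfOmega, Real.Gamma_add_one (by positivity),
    Real.sqrt_eq_rpow, ← Real.rpow_natCast, ← Real.rpow_mul Real.pi_pos.le]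
  have : Real.Gamma ((m:ℝ)/2) ≠ 0 := (Real.Gamma_pos_of_pos (by positivity)).ne'
  rw [show (1 / 2 : ℝ) * m = m / 2 by ring]
  field_simp

/-- Integral over `ℝ^m`. -/
theorem minV (m : ℕ) (hm : 1 ≤ m) (s L C : ℝ) (hs : 1 / 2 < s) (hs1 : s < 1) (hL : 0 < L) (hC : 0 < C) :
    Integrable (fun z : EuclideanSpace ℝ (Fin m) =>
      min (C * ‖z‖ ^ 2) (2 * L * ‖z‖) * ‖z‖ ^ (-(m + 2 * s))) ∧
    ∫ z : EuclideanSpace ℝ (Fin m), min (C * ‖z‖ ^ 2) (2 * L * ‖z‖) * ‖z‖ ^ (-(m + 2 * s)) =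
      surfOmega m * (mu1 s L C / (1 - s)) := by
  have : Nonempty (Fin m) := ⟨⟨0, hm⟩⟩
  have hrad := radial s L C hs hs1 hL hC
  have e : ∀ r ∈ Set.Ioi (0:ℝ), min (C * r ^ 2) (2 * L * r) * r ^ (-(1 + 2 * s)) =
      r ^ (m - 1) • (min (C * r ^ 2) (2 * L * r) * r ^ (-((m:ℝ) + 2 * s))) := by
    intro r hr
    have h0 : 0 < r := hr
    rw [show -(1 + 2 * s) = ((m - 1 : ℕ) : ℝ) + (-((m:ℝ) + 2 * s)) by push_cast [hm]; ring,
      Real.rpow_add h0, Real.rpow_natCast, smul_eq_mul]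
    ring
  constructor
  · have := (integrable_fun_norm_addHaar (E := EuclideanSpace ℝ (Fin m)) volume
      (f := fun r => min (C * r ^ 2) (2 * L * r) * r ^ (-((m:ℝ) + 2 * s)))).2
    apply this
    rw [finrank_euclideanSpace_fin]
    exact hrad.1.congr_fun e measurableSet_Ioi
  · have := (integral_fun_norm_addHaar (E := EuclideanSpace ℝ (Fin m)) volume
      (f := fun r => min (C * r ^ 2) (2 * L * r) * r ^ (-((m:ℝ) + 2 * s))))
    rw [this, finrank_euclideanSpace_fin, ← setIntegral_congr_fun measurableSet_Ioi e, hrad.2,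
      ← omega_eq m hm]
    simp [mul_assoc]

theorem minR (s L C : ℝ) (hs : 1 / 2 < s) (hs1 : s < 1) (hL : 0 < L) (hC : 0 < C) :
    Integrable (fun t : ℝ => min (C * |t| ^ 2) (2 * L * |t|) * |t| ^ (-(1 + 2 * s))) := by
  have := (integrable_fun_norm_addHaar (E := ℝ) volume
      (f := fun r => min (C * r ^ 2) (2 * L * r) * r ^ (-(1 + 2 * s)))).2
  apply this
  simpa using (radial s L C hs hs1 hL hC).1

theorem sq_rpow_aux {α r e : ℝ} (hα : 0 < α) (hr : 0 < r) :
    (α * r ^ 2) ^ (-(e / 2)) = α ^ (-(e / 2)) * r ^ (-e) := by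
  rw [Real.mul_rpow hα.le (by positivity), ← Real.rpow_two, ← Real.rpow_mul hr.le]
  congr 2
  ring

theorem ab_aux {α β : ℝ} {m : ℕ} (hα : 0 < α) (hβ : 0 < β) (hab : α * β ^ m = 1) :
    β ^ (-((m:ℝ) / 2)) * α ^ (-(1 / 2 : ℝ)) = 1 := by
  have h : (α * β ^ m) ^ (-(1 / 2 : ℝ)) = 1 := by rw [hab, Real.one_rpow]
  rw [Real.mul_rpow hα.le (by positivity), ← Real.rpow_natCast, ← Real.rpow_mul hβ.le] at h
  rw [show -((m:ℝ) / 2) = m * -(1 / 2 : ℝ) by ring, mul_comm]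
  exact h

theorem sec1 (m : ℕ) (hm : 1 ≤ m) (s α β : ℝ) (hs : 1 / 2 < s) (hα : 0 < α) (hβ : 0 < β)
    (hab : α * β ^ m = 1) (t : ℝ) (ht : t ≠ 0) :
    Integrable (fun z : EuclideanSpace ℝ (Fin m) => (α * |t| ^ 2 + β * ‖z‖ ^ 2) ^ (-(((m:ℝ) + 1 + 2 * s) / 2))) ∧
    ∫ z : EuclideanSpace ℝ (Fin m), (α * |t| ^ 2 + β * ‖z‖ ^ 2) ^ (-(((m:ℝ) + 1 + 2 * s) / 2)) =
      C2 (m + 1) s * α ^ (-s) * |t| ^ (-(1 + 2 * s)) := by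
  have ht' : 0 < |t| := abs_pos.2 ht
  have hm0 : (0:ℝ) < m := by exact_mod_cast hm
  have B := bracket (V := EuclideanSpace ℝ (Fin m)) (b := β) (c := α * |t| ^ 2)
    (q := ((m:ℝ) + 1 + 2 * s) / 2) hβ (by positivity)
    (by rw [finrank_euclideanSpace_fin]; linarith)
  refine ⟨B.1, B.2.trans ?_⟩
  rw [finrank_euclideanSpace_fin, show (m:ℝ) / 2 - ((m:ℝ) + 1 + 2 * s) / 2 = -((1 + 2 * s) / 2) by ring,
    sq_rpow_aux hα ht', Real.div_rpow Real.pi_pos.le hβ.le, div_eq_mul_inv, ← Real.rpow_neg hβ.le,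
    show -((1 + 2 * s) / 2) = -(1/2 : ℝ) + (-s) by ring, Real.rpow_add hα]
  have h := ab_aux hα hβ hab
  have hC2 : C2 (m + 1) s = Real.pi ^ ((m:ℝ) / 2) *
      (Real.Gamma (((m:ℝ) + 1 + 2 * s) / 2 - m / 2) / Real.Gamma (((m:ℝ) + 1 + 2 * s) / 2)) := by
    rw [C2, surfOmega]
    push_cast
    rw [show ((m:ℝ) + 1 - 1) / 2 = m / 2 by ring,
      show ((m:ℝ) + 1 + 2 * s) / 2 - m / 2 = s + 1 / 2 by ring,
      show ((m:ℝ) + 1) / 2 + s = ((m:ℝ) + 1 + 2 * s) / 2 by ring]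
    have : Real.Gamma ((m:ℝ)/2) ≠ 0 := (Real.Gamma_pos_of_pos (by positivity)).ne'
    have : Real.Gamma (((m:ℝ) + 1 + 2 * s) / 2) ≠ 0 := (Real.Gamma_pos_of_pos (by positivity)).ne'
    field_simp
  rw [hC2]
  generalize β ^ (-((m:ℝ) / 2)) = X at *
  generalize α ^ (-(1/2 : ℝ)) = Y at *
  linear_combination (Real.pi ^ ((m:ℝ) / 2) *
      (Real.Gamma (((m:ℝ) + 1 + 2 * s) / 2 - m / 2) / Real.Gamma (((m:ℝ) + 1 + 2 * s) / 2)) *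
      α ^ (-s) * |t| ^ (-(1 + 2 * s))) * h

theorem sec2 (m : ℕ) (hm : 1 ≤ m) (s α β : ℝ) (hs : 1 / 2 < s) (hα : 0 < α) (hβ : 0 < β)
    (hab : α * β ^ m = 1) (z : EuclideanSpace ℝ (Fin m)) (hz : z ≠ 0) :
    Integrable (fun t : ℝ => (α * |t| ^ 2 + β * ‖z‖ ^ 2) ^ (-(((m:ℝ) + 1 + 2 * s) / 2))) ∧
    ∫ t : ℝ, (α * |t| ^ 2 + β * ‖z‖ ^ 2) ^ (-(((m:ℝ) + 1 + 2 * s) / 2)) =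
      (Real.sqrt Real.pi * Real.Gamma ((m:ℝ) / 2 + s) / Real.Gamma (((m:ℝ) + 1) / 2 + s)) *
        β ^ (-s) * ‖z‖ ^ (-((m:ℝ) + 2 * s)) := by
  have hz' : 0 < ‖z‖ := norm_pos_iff.2 hz
  have hm0 : (0:ℝ) < m := by exact_mod_cast hm
  have B := bracket (V := ℝ) (b := α) (c := β * ‖z‖ ^ 2)
    (q := ((m:ℝ) + 1 + 2 * s) / 2) hα (by positivity)
    (by simp; linarith)
  simp only [Real.norm_eq_abs, add_comm (β * ‖z‖ ^ 2)] at B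
  refine ⟨B.1, B.2.trans ?_⟩
  rw [Module.finrank_self, Nat.cast_one, show 1 / 2 - ((m:ℝ) + 1 + 2 * s) / 2 = -((m + 2 * s) / 2) by ring,
    sq_rpow_aux hβ hz', Real.div_rpow Real.pi_pos.le hα.le, div_eq_mul_inv, ← Real.rpow_neg hα.le,
    show -((m + 2 * s) / 2) = -((m:ℝ)/2) + (-s) by ring, Real.rpow_add hβ,
    show ((m:ℝ) + 1 + 2 * s) / 2 - 1 / 2 = m / 2 + s by ring,
    show ((m:ℝ) + 1 + 2 * s) / 2 = ((m:ℝ) + 1) / 2 + s by ring, Real.sqrt_eq_rpow]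
  have h := ab_aux hα hβ hab
  generalize β ^ (-((m:ℝ) / 2)) = X at *
  generalize α ^ (-(1/2 : ℝ)) = Y at *
  linear_combination (Real.pi ^ (1 / 2 : ℝ) * (Real.Gamma ((m:ℝ) / 2 + s) / Real.Gamma (((m:ℝ) + 1) / 2 + s)) *
      β ^ (-s) * ‖z‖ ^ (-((m:ℝ) + 2 * s))) * h

theorem C2pos (m : ℕ) (hm : 1 ≤ m) (s : ℝ) (hs : 1 / 2 < s) : 0 < C2 (m + 1) s := by
  have hm0 : (0:ℝ) < m := by exact_mod_cast hm
  have a1 : 0 < Real.Gamma ((m:ℝ)/2) := (Real.Gamma_pos_of_pos (by positivity))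
  have a2 : 0 < Real.Gamma (s + 1/2) := (Real.Gamma_pos_of_pos (by positivity))
  have a3 : 0 < Real.Gamma (((m:ℝ)+1)/2 + s) := (Real.Gamma_pos_of_pos (by positivity))
  rw [C2, surfOmega]
  push_cast
  rw [show ((m:ℝ) + 1 - 1) / 2 = m / 2 by ring]
  positivity

set_option maxHeartbeats 1000000 in
theorem core (m : ℕ) (hm : 1 ≤ m) (s L C α β : ℝ) (hs : 1 / 2 < s) (hs1 : s < 1) (hL : 0 < L)
    (hC : 0 < C) (hα : 0 < α) (hβ : 0 < β)
    (hab : α * β ^ m = 1) (f : ℝ → ℝ) (hf : Continuous f)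
    (hfu : ∀ t, f t ≤ min (C * |t| ^ 2) (2 * L * |t|))
    (D : ℝ × EuclideanSpace ℝ (Fin m) → ℝ)
    (hD : ∀ t z, D (t, z) + D (t, -z) ≤ 2 * f t + 2 * min (C * ‖z‖ ^ 2) (2 * L * ‖z‖))
    (hI : Integrable (fun p : ℝ × EuclideanSpace ℝ (Fin m) =>
      D p * (α * |p.1| ^ 2 + β * ‖p.2‖ ^ 2) ^ (-(((m:ℝ) + 1 + 2 * s) / 2))) (volume.prod volume)) :
    Integrable (fun t => f t * |t| ^ (-(1 + 2 * s))) ∧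
    (1 - s) * (1 / 2 * ∫ p : ℝ × EuclideanSpace ℝ (Fin m), D p * (α * |p.1| ^ 2 + β * ‖p.2‖ ^ 2) ^ (-(((m:ℝ) + 1 + 2 * s) / 2))
      ∂(volume.prod volume)) ≤
      C2 (m + 1) s * α ^ (-s) * ((1 - s) * (1 / 2 * ∫ t, f t * |t| ^ (-(1 + 2 * s)))) +
        C1 (m + 1) s L C * β ^ (-s) := by
  set q : ℝ := ((m:ℝ) + 1 + 2 * s) / 2 with hq
  have hm0 : (0:ℝ) < m := by exact_mod_cast hm
  have : Nonempty (Fin m) := ⟨⟨0, hm⟩⟩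
  set K : ℝ → EuclideanSpace ℝ (Fin m) → ℝ := fun t z => (α * |t| ^ 2 + β * ‖z‖ ^ 2) ^ (-q) with hKdef
  have hK0 : ∀ t z, 0 ≤ K t z := fun t z => by simp only [hKdef]; positivity
  have hKm : Measurable (fun p : ℝ × EuclideanSpace ℝ (Fin m) => K p.1 p.2) := by
    simp only [hKdef]; fun_prop
  set k1 : ℝ → ℝ := fun t => C2 (m + 1) s * α ^ (-s) * |t| ^ (-(1 + 2 * s)) with hk1
  set I1 : ℝ := Real.sqrt Real.pi * Real.Gamma ((m:ℝ) / 2 + s) / Real.Gamma (((m:ℝ) + 1) / 2 + s) with hI1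
  have hC2pos := C2pos m hm s hs
  have hs1' : ∀ᵐ t : ℝ, Integrable (K t) ∧ ∫ z, K t z = k1 t := by
    filter_upwards [compl_mem_ae_iff.2 (measure_singleton (0:ℝ))] with t ht
    exact sec1 m hm s α β hs hα hβ hab t ht
  have hs2' : ∀ᵐ z : EuclideanSpace ℝ (Fin m), Integrable (fun t => K t z) ∧ ∫ t, K t z =
      I1 * β ^ (-s) * ‖z‖ ^ (-((m:ℝ) + 2 * s)) := by
    filter_upwards [compl_mem_ae_iff.2 (measure_singleton (0:EuclideanSpace ℝ (Fin m)))] with z hz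
    exact sec2 m hm s α β hs hα hβ hab z hz
  -- first majorant
  have W1 := wprod (μ := volume) (ν := (volume : Measure (EuclideanSpace ℝ (Fin m))))
    (fun t : ℝ => min (C * |t| ^ 2) (2 * L * |t|)) K k1
    (by
      apply Measurable.aestronglyMeasurable
      apply Measurable.mul _ hKm
      fun_prop) hK0 hs1'
    (by
      refine ((minR s L C hs hs1 hL hC).const_mul (C2 (m + 1) s * α ^ (-s))).congr
        (Filter.Eventually.of_forall fun t => ?_)
      simp only [hk1]; ring)
  -- second majorant
  have V := minV m hm s L C hs hs1 hL hC
  have hm2 : AEStronglyMeasurable (fun p : EuclideanSpace ℝ (Fin m) × ℝ =>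
      min (C * ‖p.1‖ ^ 2) (2 * L * ‖p.1‖) * K p.2 p.1) (volume.prod volume) := by
    apply Measurable.aestronglyMeasurable
    have h1 : Measurable (fun p : EuclideanSpace ℝ (Fin m) × ℝ => min (C * ‖p.1‖ ^ 2) (2 * L * ‖p.1‖)) := by
      fun_prop
    have h2 : Measurable (fun p : EuclideanSpace ℝ (Fin m) × ℝ => K p.2 p.1) := hKm.comp measurable_swap
    exact h1.mul h2
  have hv2 : Integrable (fun z : EuclideanSpace ℝ (Fin m) => min (C * ‖z‖ ^ 2) (2 * L * ‖z‖) *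
      (I1 * β ^ (-s) * ‖z‖ ^ (-((m:ℝ) + 2 * s)))) := by
    refine (V.1.const_mul (I1 * β ^ (-s))).congr
        (Filter.Eventually.of_forall fun t => ?_)
    simp only; ring
  have W2' := wprod (μ := (volume : Measure (EuclideanSpace ℝ (Fin m)))) (ν := (volume : Measure ℝ))
    (fun z => min (C * ‖z‖ ^ 2) (2 * L * ‖z‖)) (fun z t => K t z)
    (fun z => I1 * β ^ (-s) * ‖z‖ ^ (-((m:ℝ) + 2 * s)))
    hm2 (fun z t => hK0 t z) hs2' hv2
  have W2i : Integrable (fun p : ℝ × EuclideanSpace ℝ (Fin m) =>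
      min (C * ‖p.2‖ ^ 2) (2 * L * ‖p.2‖) * K p.1 p.2) (volume.prod volume) := W2'.1.swap
  have W2e : ∫ p : ℝ × EuclideanSpace ℝ (Fin m),
      min (C * ‖p.2‖ ^ 2) (2 * L * ‖p.2‖) * K p.1 p.2 ∂(volume.prod volume) =
      I1 * β ^ (-s) * (surfOmega m * (mu1 s L C / (1 - s))) := by
    rw [← V.2, ← integral_const_mul]
    have h1 := integral_prod_swap (μ := volume) (ν := volume) (fun p : ℝ × EuclideanSpace ℝ (Fin m) =>
      min (C * ‖p.2‖ ^ 2) (2 * L * ‖p.2‖) * K p.1 p.2)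
    rw [← h1]
    refine W2'.2.trans ?_
    congr 1
    ext z
    ring
  -- reflection
  have hmp : MeasurePreserving (Prod.map id Neg.neg : ℝ × EuclideanSpace ℝ (Fin m) → _)
      (volume.prod volume) (volume.prod volume) :=
    (MeasurePreserving.id volume).prod (Measure.measurePreserving_neg volume)
  have hme : MeasurableEmbedding (Prod.map id Neg.neg : ℝ × EuclideanSpace ℝ (Fin m) → _) :=
    ((MeasurableEquiv.refl ℝ).prodCongr (MeasurableEquiv.neg (EuclideanSpace ℝ (Fin m)))).measurableEmbedding
  have hI' : Integrable (fun p : ℝ × EuclideanSpace ℝ (Fin m) => D (p.1, -p.2) * K p.1 p.2) (volume.prod volume) := by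
    have := (hmp.integrable_comp_emb hme).2 hI
    refine this.congr (Filter.Eventually.of_forall fun p => ?_)
    simp [hKdef, Prod.map]
  have hIe : ∫ p : ℝ × EuclideanSpace ℝ (Fin m), D (p.1, -p.2) * K p.1 p.2 ∂(volume.prod volume) =
      ∫ p : ℝ × EuclideanSpace ℝ (Fin m), D p * K p.1 p.2 ∂(volume.prod volume) := by
    rw [← hmp.integral_comp hme]
    simp [hKdef, Prod.map]
  change Integrable (fun p => D p * K p.1 p.2) _ at hI
  have hpt : ∀ p : ℝ × EuclideanSpace ℝ (Fin m), D p * K p.1 p.2 + D (p.1, -p.2) * K p.1 p.2 ≤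
      2 * (f p.1 * K p.1 p.2) + 2 * (min (C * ‖p.2‖ ^ 2) (2 * L * ‖p.2‖) * K p.1 p.2) := by
    intro p
    have := mul_le_mul_of_nonneg_right (hD p.1 p.2) (hK0 p.1 p.2)
    simp only [Prod.mk.eta] at this
    linarith
  -- integrability of f K
  have hfK : Integrable (fun p : ℝ × EuclideanSpace ℝ (Fin m) => f p.1 * K p.1 p.2) (volume.prod volume) := by
    refine Integrable.mono' ((W1.1.norm.add W2i.norm).add (hI.norm.add hI'.norm)) ?_ ?_
    · apply Measurable.aestronglyMeasurable
      apply Measurable.mul _ hKm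
      exact hf.measurable.comp measurable_fst
    · refine Filter.Eventually.of_forall fun p => ?_
      have h1 := hpt p
      have h2 := mul_le_mul_of_nonneg_right (hfu p.1) (hK0 p.1 p.2)
      simp only [Pi.add_apply, Real.norm_eq_abs]
      rw [abs_le]
      have a1 := abs_le.1 (le_refl |min (C * |p.1| ^ 2) (2 * L * |p.1|) * K p.1 p.2|)
      have a2 := abs_le.1 (le_refl |min (C * ‖p.2‖ ^ 2) (2 * L * ‖p.2‖) * K p.1 p.2|)
      have a3 := abs_le.1 (le_refl |D p * K p.1 p.2|)
      have a4 := abs_le.1 (le_refl |D (p.1, -p.2) * K p.1 p.2|)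
      constructor <;> linarith [abs_nonneg (D p * K p.1 p.2), abs_nonneg (D (p.1, -p.2) * K p.1 p.2)]
  have hfk1 : Integrable (fun t => f t * k1 t) := by
    refine hfK.integral_prod_left.congr ?_
    filter_upwards [hs1'] with t ht
    rw [integral_const_mul, ht.2]
  have hres : Integrable (fun t => f t * |t| ^ (-(1 + 2 * s))) := by
    refine (hfk1.const_mul (C2 (m + 1) s * α ^ (-s))⁻¹).congr (Filter.Eventually.of_forall fun t => ?_)
    have : α ^ (-s) ≠ 0 := by positivity
    simp only [hk1]
    field_simp
  refine ⟨hres, ?_⟩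
  have hfe : ∫ p : ℝ × EuclideanSpace ℝ (Fin m), f p.1 * K p.1 p.2 ∂(volume.prod volume) =
      C2 (m + 1) s * α ^ (-s) * ∫ t, f t * |t| ^ (-(1 + 2 * s)) := by
    rw [integral_prod _ hfK, ← integral_const_mul]
    refine integral_congr_ae ?_
    filter_upwards [hs1'] with t ht
    rw [integral_const_mul, ht.2]
    simp only [hk1]; ring
  have hmono := integral_mono (hI.add hI') ((hfK.const_mul 2).add (W2i.const_mul 2)) hpt
  simp only [Pi.add_apply] at hmono
  rw [integral_add hI hI', integral_add (hfK.const_mul 2) (W2i.const_mul 2), hIe,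
    integral_const_mul, integral_const_mul, hfe, W2e] at hmono
  have hC1 : C1 (m + 1) s L C = I1 * (mu1 s L C * surfOmega m / 2) := by
    rw [C1, hI1]
    push_cast
    rw [show ((m:ℝ) + 1 - 1) / 2 = m / 2 by ring]
  rw [hC1]
  have h1s : 0 < 1 - s := by linarith
  have hmono2 := mul_le_mul_of_nonneg_left hmono (show 0 ≤ (1 - s) / 4 by linarith)
  change (1 - s) * (1 / 2 * ∫ p : ℝ × EuclideanSpace ℝ (Fin m), D p * K p.1 p.2 ∂(volume.prod volume)) ≤ _
  have e : (1 - s) * (mu1 s L C / (1 - s)) = mu1 s L C := by field_simp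
  have e2 : (1 - s) / 4 * (2 * (I1 * β ^ (-s) * (surfOmega m * (mu1 s L C / (1 - s))))) =
      I1 * (mu1 s L C * surfOmega m / 2) * β ^ (-s) := by
    linear_combination (I1 * β ^ (-s) * surfOmega m / 2) * e
  linarith

noncomputable def splitE (m : ℕ) : ℝ × EuclideanSpace ℝ (Fin m) ≃ᵐ EuclideanSpace ℝ (Fin (m + 1)) :=
  ((MeasurableEquiv.refl ℝ).prodCongr (MeasurableEquiv.toLp 2 (Fin m → ℝ)).symm).trans
    ((MeasurableEquiv.piFinSuccAbove (fun _ : Fin (m + 1) => ℝ) 0).symm.trans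
      (MeasurableEquiv.toLp 2 (Fin (m + 1) → ℝ)))

theorem splitE_mp (m : ℕ) : MeasurePreserving (splitE m) (volume.prod volume) volume := by
  have h1 : MeasurePreserving ((MeasurableEquiv.refl ℝ).prodCongr (MeasurableEquiv.toLp 2 (Fin m → ℝ)).symm)
      (volume.prod volume) (volume.prod volume) :=
    (MeasurePreserving.id volume).prod (PiLp.volume_preserving_ofLp (Fin m))
  have h2 : MeasurePreserving (MeasurableEquiv.piFinSuccAbove (fun _ : Fin (m + 1) => ℝ) 0).symm
      (volume.prod volume) volume := (volume_preserving_piFinSuccAbove (fun _ : Fin (m + 1) => ℝ) 0).symm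
  exact ((PiLp.volume_preserving_toLp (Fin (m+1))).comp h2).comp h1

theorem splitE_zero (m : ℕ) (t : ℝ) (z : EuclideanSpace ℝ (Fin m)) : splitE m (t, z) 0 = t := by
  simp [splitE, MeasurableEquiv.piFinSuccAbove, Fin.insertNthEquiv]
  rfl

theorem splitE_succ (m : ℕ) (t : ℝ) (z : EuclideanSpace ℝ (Fin m)) (i : Fin m) :
    splitE m (t, z) i.succ = z i := by
  simp [splitE, MeasurableEquiv.piFinSuccAbove, Fin.insertNthEquiv]
  rfl

theorem splitE_add (m : ℕ) (t : ℝ) (z : EuclideanSpace ℝ (Fin m)) :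
    splitE m (t, z) = t • EuclideanSpace.single (0 : Fin (m+1)) (1:ℝ) + splitE m (0, z) := by
  ext i
  refine Fin.cases ?_ (fun j => ?_) i
  · simp [splitE_zero]
  · simp [splitE_succ]

theorem splitE_neg (m : ℕ) (z : EuclideanSpace ℝ (Fin m)) :
    splitE m (0, -z) = - splitE m (0, z) := by
  ext i
  refine Fin.cases ?_ (fun j => ?_) i
  · simp [splitE_zero]
  · simp [splitE_succ]

theorem splitE_norm (m : ℕ) (z : EuclideanSpace ℝ (Fin m)) :
    ‖splitE m (0, z)‖ = ‖z‖ := by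
  rw [EuclideanSpace.norm_eq, EuclideanSpace.norm_eq, Fin.sum_univ_succ]
  simp [splitE_zero, splitE_succ]

noncomputable def matA (m : ℕ) (a b : ℝ) : Matrix (Fin (m+1)) (Fin (m+1)) ℝ :=
  Matrix.diagonal (Fin.cons a (fun _ => b))

theorem matA_inv (m : ℕ) {a b : ℝ} (ha : 0 < a) (hb : 0 < b) : (matA m a⁻¹ b⁻¹)⁻¹ = matA m a b := by
  apply Matrix.inv_eq_right_inv
  rw [matA, matA, Matrix.diagonal_mul_diagonal, ← Matrix.diagonal_one]
  congr 1
  ext i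
  refine Fin.cases ?_ (fun j => ?_) i
  · simp [ha.ne']
  · simp [hb.ne']

theorem matA_posDef (m : ℕ) {a b : ℝ} (ha : 0 < a) (hb : 0 < b) : (matA m a b).PosDef := by
  apply Matrix.PosDef.diagonal
  intro i
  refine Fin.cases ?_ (fun j => ?_) i
  · simpa using ha
  · simpa using hb

theorem matA_det (m : ℕ) (a b : ℝ) : (matA m a b).det = a * b ^ m := by
  rw [matA, Matrix.det_diagonal, Fin.prod_univ_succ]
  simp

theorem matA_norm (m : ℕ) (a b : ℝ) (t : ℝ) (z : EuclideanSpace ℝ (Fin m)) :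
    ‖(EuclideanSpace.equiv (Fin (m+1)) ℝ).symm ((matA m a b).mulVec
      (EuclideanSpace.equiv (Fin (m+1)) ℝ (splitE m (t, z))))‖ ^ 2 =
      a ^ 2 * |t| ^ 2 + b ^ 2 * ‖z‖ ^ 2 := by
  rw [EuclideanSpace.norm_sq_eq, EuclideanSpace.norm_sq_eq, Fin.sum_univ_succ, Finset.mul_sum]
  simp [matA, Matrix.mulVec_diagonal, splitE_zero, splitE_succ, mul_pow]

theorem kernel_split (m : ℕ) (s a b : ℝ) (ha : 0 < a) (hb : 0 < b)
    (u : EuclideanSpace ℝ (Fin (m+1)) → ℝ) (x : EuclideanSpace ℝ (Fin (m+1)))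
    (p : ℝ × EuclideanSpace ℝ (Fin m)) :
    kernelA s (matA m a⁻¹ b⁻¹) u x (splitE m p) =
      delta2 u x (splitE m p) * (a ^ 2 * |p.1| ^ 2 + b ^ 2 * ‖p.2‖ ^ 2) ^ (-(((m:ℝ) + 1 + 2 * s) / 2)) := by
  obtain ⟨t, z⟩ := p
  rw [kernelA, matA_inv m ha hb, ← matA_norm, div_eq_mul_inv, ← Real.rpow_neg (norm_nonneg _),
    ← Real.rpow_natCast, ← Real.rpow_mul (norm_nonneg _)]
  congr 2
  push_cast
  ring

theorem C1pos (m : ℕ) (hm : 1 ≤ m) (s L C : ℝ) (hs : 1 / 2 < s) (hL : 0 < L) (hC : 0 < C) :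
    0 < C1 (m + 1) s L C := by
  have hm0 : (0:ℝ) < m := by exact_mod_cast hm
  have a1 : 0 < Real.Gamma ((m:ℝ)/2) := (Real.Gamma_pos_of_pos (by positivity))
  have a2 : 0 < Real.Gamma ((m:ℝ)/2 + s) := (Real.Gamma_pos_of_pos (by positivity))
  have a3 : 0 < Real.Gamma (((m:ℝ)+1)/2 + s) := (Real.Gamma_pos_of_pos (by positivity))
  have a4 : 0 < 2 * s - 1 := by linarith
  rw [C1, surfOmega, mu1]
  push_cast
  rw [show ((m:ℝ) + 1 - 1) / 2 = m / 2 by ring]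
  positivity

theorem stmt5 (n : ℕ) (hn : 2 ≤ n) (s L C η₀ : ℝ)
    (hs : 1 / 2 < s) (hs1 : s < 1) (hL : 0 < L) (hC : 0 < C) (hη : 0 < η₀)
    (u : EuclideanSpace ℝ (Fin n) → ℝ)
    (hLip : ∀ a b : EuclideanSpace ℝ (Fin n), |u a - u b| ≤ L * ‖a - b‖)
    (hSC : ∀ a b : EuclideanSpace ℝ (Fin n), delta2 u a b ≤ C * ‖b‖ ^ 2)
    (x : EuclideanSpace ℝ (Fin n))
    (hEll : ∀ A : Matrix (Fin n) (Fin n) ℝ, A.PosDef → A.det = 1 →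
      Integrable (fun y => kernelA s A u x y) ∧ η₀ ≤ (1 - s) * LA s A u x) :
    Integrable (fun t : ℝ =>
      delta2 u x (t • EuclideanSpace.single (⟨0, by omega⟩ : Fin n) (1 : ℝ)) / |t| ^ (1 + 2 * s)) ∧
    mu0 n s L C η₀ ≤ (1 - s) * (1 / 2 * ∫ t : ℝ,
      delta2 u x (t • EuclideanSpace.single (⟨0, by omega⟩ : Fin n) (1 : ℝ)) / |t| ^ (1 + 2 * s)) := by
  obtain ⟨m, rfl⟩ : ∃ m, n = m + 1 := ⟨n - 1, by omega⟩
  have hm : 1 ≤ m := by omega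
  have hm0 : (0:ℝ) < m := by exact_mod_cast hm
  have hC1 := C1pos m hm s L C hs hL hC
  have hC2 := C2pos m hm s hs
  have hs0 : 0 < s := by linarith
  set κ : ℝ := η₀ / (2 * C1 (m + 1) s L C) with hκ
  have hκ0 : 0 < κ := by positivity
  set a : ℝ := κ ^ ((m:ℝ) / (2 * s)) with ha
  set b : ℝ := κ ^ (-(1 / (2 * s))) with hb
  have ha0 : 0 < a := by positivity
  have hb0 : 0 < b := by positivity
  have hab : a * b ^ m = 1 := by
    rw [ha, hb, ← Real.rpow_natCast, ← Real.rpow_mul hκ0.le, ← Real.rpow_add hκ0]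
    rw [show (m:ℝ) / (2 * s) + -(1 / (2 * s)) * m = 0 by ring, Real.rpow_zero]
  have hab2 : a ^ 2 * (b ^ 2) ^ m = 1 := by
    rw [← pow_mul, mul_comm 2 m, pow_mul, ← mul_pow, hab, one_pow]
  have hαs : (a ^ 2) ^ (-s) = (κ ^ m)⁻¹ := by
    rw [ha, ← Real.rpow_natCast, ← Real.rpow_natCast, ← Real.rpow_mul hκ0.le, ← Real.rpow_mul hκ0.le,
      ← Real.rpow_neg hκ0.le]
    congr 1
    push_cast
    field_simp
  have hβs : (b ^ 2) ^ (-s) = κ := by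
    rw [hb, ← Real.rpow_natCast, ← Real.rpow_mul hκ0.le, ← Real.rpow_mul hκ0.le]
    rw [show -(1 / (2 * s)) * ((2:ℕ):ℝ) * -s = 1 by push_cast; field_simp, Real.rpow_one]
  obtain ⟨hI, hE⟩ := hEll (matA m a⁻¹ b⁻¹) (matA_posDef m (by positivity) (by positivity))
    (by rw [matA_det, inv_pow, ← mul_inv, hab, inv_one])
  have hme : MeasurableEmbedding (splitE m) := (splitE m).measurableEmbedding
  have hI2 := ((splitE_mp m).integrable_comp_emb hme).2 hI
  have hE2 := hE
  rw [LA, ← (splitE_mp m).integral_comp hme] at hE2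
  simp only [Function.comp_def, kernel_split m s a b ha0 hb0] at hI2 hE2
  have hcont : Continuous u := by
    refine LipschitzWith.continuous (K := ⟨L, hL.le⟩) (LipschitzWith.of_dist_le_mul fun p r => ?_)
    rw [Real.dist_eq, dist_eq_norm]
    exact hLip p r
  have hmin : ∀ p w, delta2 u p w ≤ min (C * ‖w‖ ^ 2) (2 * L * ‖w‖) := by
    intro p w
    refine le_min (hSC p w) ?_
    have h1 := (abs_le.1 (hLip (p + w) p)).2
    have h2 := (abs_le.1 (hLip (p - w) p)).2
    rw [add_sub_cancel_left] at h1
    rw [sub_sub_cancel_left, norm_neg] at h2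
    rw [delta2]
    linarith
  have key := core m hm s L C (a ^ 2) (b ^ 2) hs hs1 hL hC (by positivity) (by positivity) hab2
    (fun t => delta2 u x (t • EuclideanSpace.single (0 : Fin (m+1)) (1 : ℝ)))
    (by simp only [delta2]; fun_prop)
    (fun t => by simpa [norm_smul] using hmin x (t • EuclideanSpace.single (0 : Fin (m+1)) (1 : ℝ)))
    (fun p => delta2 u x (splitE m p))
    (by
      intro t z
      have h1 := hmin (x + t • EuclideanSpace.single (0 : Fin (m+1)) (1 : ℝ)) (splitE m (0, z))
      have h2 := hmin (x - t • EuclideanSpace.single (0 : Fin (m+1)) (1 : ℝ)) (splitE m (0, z))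
      rw [splitE_norm] at h1 h2
      rw [splitE_add m t z, splitE_add m t (-z), splitE_neg]
      generalize splitE m (0, z) = w at *
      generalize t • EuclideanSpace.single (0 : Fin (m+1)) (1 : ℝ) = v at *
      simp only [delta2] at *
      rw [show x + (v + w) = x + v + w by abel, show x - (v + w) = x - v - w by abel,
        show x + (v + -w) = x + v - w by abel, show x - (v + -w) = x - v + w by abel]
      linarith)
    hI2
  have hfun : (fun t : ℝ =>
      delta2 u x (t • EuclideanSpace.single (⟨0, by omega⟩ : Fin (m + 1)) (1 : ℝ)) / |t| ^ (1 + 2 * s)) =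
      fun t : ℝ => delta2 u x (t • EuclideanSpace.single (0 : Fin (m+1)) (1 : ℝ)) * |t| ^ (-(1 + 2 * s)) := by
    ext t
    rw [Real.rpow_neg (abs_nonneg t), div_eq_mul_inv]
    rfl
  rw [hfun]
  refine ⟨key.1, ?_⟩
  have k2 := hE2.trans key.2
  rw [hαs, hβs] at k2
  generalize (1 - s) * (1 / 2 * ∫ t : ℝ, delta2 u x (t • EuclideanSpace.single (0 : Fin (m+1)) (1 : ℝ)) *
    |t| ^ (-(1 + 2 * s))) = J at k2 ⊢
  have e1 : C1 (m + 1) s L C * κ = η₀ / 2 := by rw [hκ]; field_simp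
  have hkm : 0 < κ ^ m := by positivity
  have e2 : mu0 (m + 1) s L C η₀ = (η₀ / 2) * κ ^ m / C2 (m + 1) s := by
    have hκ' : κ = (η₀ / 2) / C1 (m + 1) s L C := by rw [hκ]; field_simp
    rw [mu0, hκ', show (1 - ((m + 1 : ℕ) : ℝ)) = -(m:ℝ) by push_cast; ring, Real.rpow_neg hC1.le,
      Real.rpow_natCast, Real.rpow_natCast, div_pow (η₀ / 2) (C1 (m + 1) s L C) m, pow_succ]
    generalize η₀ / 2 = h
    field_simp
  rw [e2, div_le_iff₀ hC2]
  have k3 : η₀ / 2 ≤ C2 (m + 1) s * (κ ^ m)⁻¹ * J := by linarith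
  have k4 := mul_le_mul_of_nonneg_right k3 hkm.le
  have : C2 (m + 1) s * (κ ^ m)⁻¹ * J * κ ^ m = J * C2 (m + 1) s := by field_simp
  linarith
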